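/- Let f : [0,1] → [0,1] preserve Lebesgue measure and suppose there exist finitely many points 0 = x_0 < x_1 < … < x_k = 1 such that f is affine with nonzero slope s_i on each interval [x_{i−1}, x_i]. Then lim_{n→∞} H_n(μ_f)/n = ∑_{i=1}^k (x_i − x_{i−1})·log|s_i| = ∫₀¹ log|f'(x)| dx. -/

import Mathlib

/-!
List the `n` sample points in increasing order of their images under `f`. Since `f` is strictly
monotone on each of the `k` pieces, the word of pieces visited by the list determines the pattern.
Conversely a pattern comes from at most `(n + 1) ^ (2 * k)` words: read from left to right, the
sample visits each piece during one interval of positions.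

Let `P w` be the product of the `|s j|⁻¹` over the letters `j` of the word `w`. As `f` expands
lengths on the piece `j` by the factor `|s j|`, the word `w` occurs with probability at most `P w`.
Since `f` preserves Lebesgue measure, at almost every `y` the `|s j|⁻¹` for which `y` lies in the
image of the piece `j` sum to `1`. An increasing list can traverse these images in at most
`(n + 1) ^ (2 * k)` different ways, so this also bounds the sum of the `P w` over the words that
occur. By Gibbs' inequality the entropy of the word, hence that of the pattern, is within
`2 * k * log (n + 1)` of the mean of `-log (P w)`, which is exactly `n * ∫ log |f'|`.
-/

open MeasureTheory Filter

/-- The probability that `n` i.i.d. points sampled from `μ` realize the pattern `π`. -/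
noncomputable def patternProb {n : ℕ} (μ : Measure (ℝ × ℝ)) (π : Equiv.Perm (Fin n)) : ℝ :=
  (n.factorial : ℝ) *
    ((Measure.pi fun _ : Fin n => μ)
      {p : Fin n → ℝ × ℝ | ∀ i j : Fin n, i < j →
        (p i).1 < (p j).1 ∧ ((p i).2 < (p j).2 ↔ π i < π j)}).toReal

/-- Sampling entropy `H_n(μ)`. -/
noncomputable def samplingEntropy (μ : Measure (ℝ × ℝ)) (n : ℕ) : ℝ :=
  ∑ π : Equiv.Perm (Fin n), Real.negMulLog (patternProb μ π)

/-- A pre-permuton: a Borel probability measure on `ℝ²` with atomless marginals. -/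
def IsPrePermuton (μ : Measure (ℝ × ℝ)) : Prop :=
  IsProbabilityMeasure μ ∧ (∀ x : ℝ, μ.map Prod.fst {x} = 0) ∧ ∀ y : ℝ, μ.map Prod.snd {y} = 0

/-- A permuton: a Borel probability measure on `[0,1]²` with uniform marginals. -/
def IsPermuton (μ : Measure (ℝ × ℝ)) : Prop :=
  μ (Set.Icc (0:ℝ) 1 ×ˢ Set.Icc (0:ℝ) 1)ᶜ = 0 ∧
  μ.map Prod.fst = volume.restrict (Set.Icc (0:ℝ) 1) ∧
  μ.map Prod.snd = volume.restrict (Set.Icc (0:ℝ) 1)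

/-- The permuton associated with a Lebesgue-measure-preserving map f : [0,1] → [0,1]:
the pushforward of Lebesgue measure on [0,1] under x ↦ (x, f x). -/
noncomputable def graphPermuton (f : ℝ → ℝ) : Measure (ℝ × ℝ) :=
  Measure.map (fun t => (t, f t)) (volume.restrict (Set.Icc (0:ℝ) 1))

section Entropy

open Real Finset

variable {ι κ : Type*}

lemma mul_negMulLog_div {p : ℝ} (hp : p ≠ 0) (t : ℝ) :
    p * negMulLog (t / p) = negMulLog t + t * log p := by
  have h := negMulLog_mul p (t / p)
  rw [mul_div_cancel₀ t hp] at h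
  have : t / p * negMulLog p = -(t * log p) := by
    rw [negMulLog]
    field_simp
  linarith

/- The log-sum inequality; writing it with `negMulLog` allows some of the `T i` to vanish. -/
lemma sum_negMulLog_add_mul_log_le (s : Finset ι) {T P : ι → ℝ} (hT : ∀ i ∈ s, 0 ≤ T i)
    (hP : ∀ i ∈ s, 0 < P i) :
    ∑ i ∈ s, (negMulLog (T i) + T i * log (P i)) ≤
      negMulLog (∑ i ∈ s, T i) + (∑ i ∈ s, T i) * log (∑ i ∈ s, P i) := by
  rcases s.eq_empty_or_nonempty with rfl | hs
  · simp
  set Z := ∑ i ∈ s, P i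
  have hZ : 0 < Z := Finset.sum_pos hP hs
  have jensen : ∑ i ∈ s, (P i / Z) • negMulLog (T i / P i) ≤
      negMulLog (∑ i ∈ s, (P i / Z) • (T i / P i)) :=
    concaveOn_negMulLog.le_map_sum (fun i hi => (div_pos (hP i hi) hZ).le)
      (by rw [← Finset.sum_div, div_self hZ.ne'])
      (fun i hi => div_nonneg (hT i hi) (hP i hi).le)
  have barycenter : ∑ i ∈ s, (P i / Z) • (T i / P i) = (∑ i ∈ s, T i) / Z := by
    rw [Finset.sum_div]
    refine Finset.sum_congr rfl fun i hi => ?_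
    have := (hP i hi).ne'
    rw [smul_eq_mul]
    field_simp
  calc ∑ i ∈ s, (negMulLog (T i) + T i * log (P i))
      = ∑ i ∈ s, P i * negMulLog (T i / P i) :=
        Finset.sum_congr rfl fun i hi => (mul_negMulLog_div (hP i hi).ne' _).symm
    _ = Z * ∑ i ∈ s, (P i / Z) • negMulLog (T i / P i) := by
        rw [Finset.mul_sum]
        refine Finset.sum_congr rfl fun i _ => ?_
        rw [smul_eq_mul]
        field_simp
    _ ≤ Z * negMulLog ((∑ i ∈ s, T i) / Z) := by
        rw [← barycenter]
        gcongr
    _ = _ := mul_negMulLog_div hZ.ne' _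

lemma negMulLog_sum_le_sum_negMulLog {s : Finset ι} {T : ι → ℝ} (hT : ∀ i ∈ s, 0 ≤ T i) :
    negMulLog (∑ i ∈ s, T i) ≤ ∑ i ∈ s, negMulLog (T i) := by
  rw [negMulLog, neg_mul, Finset.sum_mul, ← Finset.sum_neg_distrib]
  refine Finset.sum_le_sum fun i hi => ?_
  rcases (hT i hi).eq_or_lt with h0 | hpos
  · simp [← h0]
  · have : log (T i) ≤ log (∑ i ∈ s, T i) := log_le_log hpos (Finset.single_le_sum hT hi)
    rw [negMulLog, neg_mul, neg_le_neg_iff]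
    gcongr

lemma sum_negMulLog_sub_log_le_sum_negMulLog_fiberwise [Fintype κ] [DecidableEq κ] {s : Finset ι}
    {T : ι → ℝ} (φ : ι → κ) {N : ℝ} (hT : ∀ i ∈ s, 0 ≤ T i) (hsum : ∑ i ∈ s, T i = 1)
    (hcard : ∀ q, (#{i ∈ s | φ i = q} : ℝ) ≤ N) :
    ∑ i ∈ s, negMulLog (T i) - log N ≤ ∑ q, negMulLog (∑ i ∈ s with φ i = q, T i) := by
  have fiber_le (q : κ) : ∑ i ∈ s with φ i = q, negMulLog (T i) ≤
      negMulLog (∑ i ∈ s with φ i = q, T i) + (∑ i ∈ s with φ i = q, T i) * log N := by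
    have hT' : ∀ i ∈ s.filter (φ · = q), 0 ≤ T i := fun i hi => hT i (Finset.mem_filter.1 hi).1
    rcases (s.filter (φ · = q)).eq_empty_or_nonempty with h | h
    · simp [h]
    · refine le_trans ?_ (add_le_add_right (mul_le_mul_of_nonneg_left
        (log_le_log (by exact_mod_cast h.card_pos) (hcard q)) (Finset.sum_nonneg hT')) _)
      simpa using sum_negMulLog_add_mul_log_le _ hT' fun _ _ => one_pos
  have := Finset.sum_le_sum fun q (_ : q ∈ univ) => fiber_le q
  rw [Finset.sum_add_distrib, ← Finset.sum_mul, Finset.sum_fiberwise, Finset.sum_fiberwise,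
    hsum] at this
  linarith

lemma abs_sum_negMulLog_fiberwise_sub_le [Fintype κ] [DecidableEq κ] {s : Finset ι}
    {T P : ι → ℝ} (φ : ι → κ) {N : ℝ} (hT : ∀ i ∈ s, 0 ≤ T i) (hP : ∀ i ∈ s, 0 < P i)
    (hTP : ∀ i ∈ s, T i ≤ P i) (hsum : ∑ i ∈ s, T i = 1) (hPN : ∑ i ∈ s, P i ≤ N)
    (hcard : ∀ q, (#{i ∈ s | φ i = q} : ℝ) ≤ N) :
    |∑ q, negMulLog (∑ i ∈ s with φ i = q, T i) - ∑ i ∈ s, T i * -log (P i)| ≤ log N := by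
  have fiberwise_le : ∑ q, negMulLog (∑ i ∈ s with φ i = q, T i) ≤ ∑ i ∈ s, negMulLog (T i) := by
    rw [← Finset.sum_fiberwise s φ]
    exact Finset.sum_le_sum fun q _ =>
      negMulLog_sum_le_sum_negMulLog fun i hi => hT i (Finset.mem_filter.1 hi).1
  have gibbs : ∑ i ∈ s, negMulLog (T i) ≤ ∑ i ∈ s, T i * -log (P i) + log N := by
    have hlog : log (∑ i ∈ s, P i) ≤ log N :=
      log_le_log (one_pos.trans_le (hsum ▸ Finset.sum_le_sum hTP)) hPN
    have := sum_negMulLog_add_mul_log_le s hT hP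
    simp only [Finset.sum_add_distrib, hsum, negMulLog_one, zero_add, one_mul] at this
    simp only [mul_neg, Finset.sum_neg_distrib]
    linarith
  have cross_le : ∑ i ∈ s, T i * -log (P i) ≤ ∑ i ∈ s, negMulLog (T i) := by
    refine Finset.sum_le_sum fun i hi => ?_
    rcases (hT i hi).eq_or_lt with h0 | hpos
    · simp [← h0]
    · have := log_le_log hpos (hTP i hi)
      rw [negMulLog, mul_neg, neg_mul, neg_le_neg_iff]
      gcongr
  have := sum_negMulLog_sub_log_le_sum_negMulLog_fiberwise φ hT hsum hcard
  rw [abs_le]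
  constructor <;> linarith

end Entropy

section Words

open Finset

variable {ι : Type*} {n : ℕ}

open Classical in
lemma card_filter_ordConnected_le (n : ℕ) :
    #{S : Set (Fin n) | S.OrdConnected} ≤ (n + 1) ^ 2 := by
  let slab : Fin (n + 1) × Fin (n + 1) → Set (Fin n) := fun p =>
    {i | p.1 ≤ i.castSucc ∧ i.castSucc < p.2}
  have mem_image (S : Set (Fin n)) (hS : S.OrdConnected) : S ∈ univ.image slab := by
    rcases S.eq_empty_or_nonempty with rfl | hne
    · exact mem_image.2 ⟨(0, 0), mem_univ _, by simp [slab]⟩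
    obtain ⟨a, ha, hmin⟩ := S.exists_min_image id S.toFinite hne
    obtain ⟨b, hb, hmax⟩ := S.exists_max_image id S.toFinite hne
    refine mem_image.2 ⟨(a.castSucc, b.succ), mem_univ _, Set.ext fun i => ?_⟩
    simp only [slab, Set.mem_ofPred_eq, Fin.castSucc_le_castSucc_iff, Fin.castSucc_lt_succ_iff]
    exact ⟨fun hi => hS.out ha hb hi, fun hi => ⟨hmin i hi, hmax i hi⟩⟩
  calc #{S : Set (Fin n) | S.OrdConnected} ≤ #(univ.image slab) :=
        card_le_card fun S hS => mem_image S (mem_filter.1 hS).2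
    _ ≤ #(univ : Finset (Fin (n + 1) × Fin (n + 1))) := card_image_le
    _ = (n + 1) ^ 2 := by simp [sq]

variable [Fintype ι]

open Classical in
/-- The `ι`-indexed families of intervals of `Fin n`. Such a family records, for each letter of the
alphabet `ι`, the interval of positions attached to that letter. -/
noncomputable def ordConnectedFamilies (ι : Type*) [Fintype ι] (n : ℕ) :
    Finset (ι → Set (Fin n)) :=
  Fintype.piFinset fun _ => {S | S.OrdConnected}

lemma mem_ordConnectedFamilies {S : ι → Set (Fin n)} :
    S ∈ ordConnectedFamilies ι n ↔ ∀ j, (S j).OrdConnected := by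
  simp [ordConnectedFamilies]

lemma card_ordConnectedFamilies_le (ι : Type*) [Fintype ι] (n : ℕ) :
    #(ordConnectedFamilies ι n) ≤ (n + 1) ^ (2 * Fintype.card ι) := by
  classical
  rw [ordConnectedFamilies, Fintype.card_piFinset, prod_const, card_univ, pow_mul]
  exact Nat.pow_le_pow_left (card_filter_ordConnected_le n) _

lemma card_le_of_ordConnected_preimage {W : Finset (Fin n → ι)} (σ : Equiv.Perm (Fin n))
    (hW : ∀ w ∈ W, ∀ j, (w ∘ σ ⁻¹' {j}).OrdConnected) :
    #W ≤ (n + 1) ^ (2 * Fintype.card ι) := by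
  refine (card_le_card_of_injOn (fun w j => w ∘ σ ⁻¹' {j})
    (fun w hw => mem_ordConnectedFamilies.2 (hW w hw)) fun w _ w' _ hww' => ?_).trans
    (card_ordConnectedFamilies_le ι n)
  refine σ.surjective.injective_comp_right (funext fun i => ?_)
  have hfiber : w ∘ σ ⁻¹' {(w ∘ σ) i} = w' ∘ σ ⁻¹' {(w ∘ σ) i} := congrFun hww' _
  exact (hfiber.subset rfl : i ∈ w' ∘ σ ⁻¹' {(w ∘ σ) i}).symm

open Classical in
/- The family of index sets `{i | y i ∈ J j}` determines which letters are possible at each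
position, so the words sharing one family contribute at most
`∏ i, ∑ j with y i ∈ J j, a j ≤ 1`. -/
lemma sum_prod_le_of_monotone_selection {β : Type*} [Preorder β] {J : ι → Set β}
    (hJ : ∀ j, (J j).OrdConnected) {a : ι → ℝ} (ha : ∀ j, 0 ≤ a j)
    (hsum : ∀ y, ∑ j with y ∈ J j, a j ≤ 1) {W : Finset (Fin n → ι)}
    (hW : ∀ w ∈ W, ∃ y : Fin n → β, Monotone y ∧ ∀ i, y i ∈ J (w i)) :
    ∑ w ∈ W, ∏ i, a (w i) ≤ ((n : ℝ) + 1) ^ (2 * Fintype.card ι) := by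
  rcases W.eq_empty_or_nonempty with rfl | ⟨w, hw⟩
  · simpa using by positivity
  have : Nonempty (Fin n → β) := ⟨(hW w hw).choose⟩
  choose! y hmono hmem using hW
  let family (w : Fin n → ι) (j : ι) : Set (Fin n) := y w ⁻¹' J j
  have fiber_le (S : ι → Set (Fin n)) : ∑ w ∈ W with family w = S, ∏ i, a (w i) ≤ 1 := by
    rcases (W.filter (family · = S)).eq_empty_or_nonempty with h | ⟨w₀, hw₀⟩
    · simp [h]
    obtain ⟨-, rfl⟩ := mem_filter.1 hw₀
    calc ∑ w ∈ W with family w = family w₀, ∏ i, a (w i)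
        ≤ ∑ w ∈ Fintype.piFinset fun i => {j | y w₀ i ∈ J j}, ∏ i, a (w i) := by
          refine sum_le_sum_of_subset_of_nonneg (fun w hw => ?_)
            fun w _ _ => prod_nonneg fun i _ => ha _
          obtain ⟨hwW, hfam⟩ := mem_filter.1 hw
          refine Fintype.mem_piFinset.2 fun i => mem_filter.2 ⟨mem_univ _, ?_⟩
          have hi : i ∈ family w (w i) := hmem w hwW i
          rwa [hfam] at hi
      _ = ∏ i, ∑ j with y w₀ i ∈ J j, a j := (prod_univ_sum _ fun _ j => a j).symm
      _ ≤ 1 := prod_le_one (fun i _ => sum_nonneg fun j _ => ha j) fun i _ => hsum _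
  calc ∑ w ∈ W, ∏ i, a (w i)
      = ∑ S ∈ ordConnectedFamilies ι n, ∑ w ∈ W with family w = S, ∏ i, a (w i) :=
        (sum_fiberwise_of_maps_to (fun w hw => mem_ordConnectedFamilies.2 fun j =>
          (hJ j).preimage_mono (hmono w hw)) _).symm
    _ ≤ ∑ S ∈ ordConnectedFamilies ι n, 1 := sum_le_sum fun S _ => fiber_le S
    _ ≤ ((n : ℝ) + 1) ^ (2 * Fintype.card ι) := by
        rw [sum_const, nsmul_one]
        exact_mod_cast card_ordConnectedFamilies_le ι n

end Words

section OrderedSamples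

open Set

variable {ι α β : Type*} [MeasurableSpace α] [MeasurableSpace β]

lemma measurableSet_strictMono [Countable ι] [Preorder ι] {γ : Type*} [LinearOrder γ]
    [TopologicalSpace γ] [OrderClosedTopology γ] [SecondCountableTopology γ] [MeasurableSpace γ]
    [OpensMeasurableSpace γ] : MeasurableSet {y : ι → γ | StrictMono y} := by
  simp only [StrictMono, ofPred_forall]
  exact .iInter fun i => .iInter fun j => .iInter fun _ =>
    measurableSet_lt (measurable_pi_apply i) (measurable_pi_apply j)

lemma measurePreserving_comp_perm [Fintype ι] (μ : Measure α) [SigmaFinite μ]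
    (σ : Equiv.Perm ι) :
    MeasurePreserving (fun z : ι → α => z ∘ σ) (Measure.pi fun _ => μ) (Measure.pi fun _ => μ) :=
  measurePreserving_arrowCongr' _ _ σ.symm (.refl α) fun _ => .id μ

lemma measurableEmbedding_comp_perm (σ : Equiv.Perm ι) :
    MeasurableEmbedding fun z : ι → α => z ∘ σ :=
  (MeasurableEquiv.arrowCongr' σ.symm (.refl α)).measurableEmbedding

lemma ae_pi_injective [Fintype ι] [MeasurableEq α] (ν : Measure α) [IsProbabilityMeasure ν]
    [NullSingletonClass ν] : ∀ᵐ y : ι → α ∂Measure.pi fun _ => ν, Function.Injective y := by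
  have coord_ne (i j : ι) (hij : i ≠ j) : ∀ᵐ y : ι → α ∂Measure.pi fun _ => ν, y i ≠ y j := by
    have hindep := (ProbabilityTheory.iIndepFun_pi (μ := fun _ : ι => ν) (X := fun _ t => t)
      fun _ => aemeasurable_id).indepFun hij
    have hpair : (Measure.pi fun _ => ν).map (fun y : ι → α => (y i, y j)) = ν.prod ν := by
      rw [hindep.map_prod_eq_prod_map_map (measurable_pi_apply i).aemeasurable
          (measurable_pi_apply j).aemeasurable,
        (measurePreserving_eval _ i).map_eq, (measurePreserving_eval _ j).map_eq]
    have offDiag : ∀ᵐ p ∂ν.prod ν, p.1 ≠ p.2 :=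
      (Measure.ae_prod_iff_ae_ae (measurableSet_eq_fun measurable_fst measurable_snd).compl).2 <|
        ae_of_all _ fun a => (Measure.ae_ne ν a).mono fun _ h => h.symm
    rw [← hpair] at offDiag
    exact ae_of_ae_map (f := fun y : ι → α => (y i, y j)) (by fun_prop) offDiag
  have := ae_all_iff.2 fun i => ae_all_iff.2 fun j => ae_all_iff.2 fun hij => coord_ne i j hij
  filter_upwards [this] with y hy i j hij
  by_contra hne
  exact hy i j hne hij

variable {n : ℕ}

lemma exists_perm_strictMono_comp {γ : Type*} [LinearOrder γ] {y : Fin n → γ}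
    (hy : Function.Injective y) : ∃ σ : Equiv.Perm (Fin n), StrictMono (y ∘ σ) :=
  ⟨Tuple.sort y, (Tuple.monotone_sort y).strictMono_of_injective (hy.comp (Equiv.injective _))⟩

lemma perm_eq_of_strictMono_comp {γ : Type*} [PartialOrder γ] {y : Fin n → γ}
    {σ τ : Equiv.Perm (Fin n)} (hσ : StrictMono (y ∘ σ)) (hτ : StrictMono (y ∘ τ)) : σ = τ := by
  have hy : Function.Injective y := (Equiv.injective_comp σ y).1 hσ.injective
  exact Equiv.ext fun i => hy (congrFun (Tuple.unique_monotone hσ.monotone hτ.monotone) i)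

/-- The law of `n` i.i.d. points sampled from `μ` and then listed in increasing order of their
images under `f`. Each ordered list arises from `n!` samples, all with the same density, so it is
encoded as `n!` times the restriction of the product measure to the lists that are already in
order. -/
noncomputable def orderedSample (μ : Measure α) (f : α → ℝ) (n : ℕ) : Measure (Fin n → α) :=
  (n.factorial : ENNReal) •
    (Measure.pi fun _ => μ).restrict {z | StrictMono (f ∘ z)}

variable {μ : Measure α} {f : α → ℝ}

instance [IsFiniteMeasure μ] : IsFiniteMeasure (orderedSample μ f n) :=
  Measure.smul_finite _ (ENNReal.natCast_ne_top _)

lemma measurableSet_strictMono_comp (hf : Measurable f) :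
    MeasurableSet {z : Fin n → α | StrictMono (f ∘ z)} :=
  measurableSet_strictMono.preimage
    (measurable_pi_lambda _ fun i => hf.comp (measurable_pi_apply i))

lemma ae_orderedSample_strictMono (hf : Measurable f) :
    ∀ᵐ z ∂orderedSample μ f n, StrictMono (f ∘ z) :=
  Measure.ae_smul_measure (ae_restrict_mem (measurableSet_strictMono_comp hf)) _

lemma ae_orderedSample_of_ae [SigmaFinite μ] {p : α → Prop} (h : ∀ᵐ t ∂μ, p t) :
    ∀ᵐ z ∂orderedSample μ f n, ∀ i, p (z i) :=
  Measure.ae_smul_measure (ae_restrict_of_ae (ae_all_iff.2 fun i =>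
    (Measure.quasiMeasurePreserving_eval _ i).ae h)) _

variable [IsProbabilityMeasure μ]

lemma ae_pi_injective_comp (hf : Measurable f) [NullSingletonClass (μ.map f)] :
    ∀ᵐ z : Fin n → α ∂Measure.pi fun _ => μ, Function.Injective (f ∘ z) := by
  have := Measure.isProbabilityMeasure_map (μ := μ) hf.aemeasurable
  exact (measurePreserving_pi (fun _ : Fin n => μ) (fun _ => μ.map f)
    fun _ => hf.measurePreserving μ).quasiMeasurePreserving.ae (ae_pi_injective _)

lemma integral_orderedSample (hf : Measurable f) [NullSingletonClass (μ.map f)]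
    {h : (Fin n → α) → ℝ} (hint : Integrable h (Measure.pi fun _ => μ))
    (hsymm : ∀ z (σ : Equiv.Perm (Fin n)), h (z ∘ σ) = h z) :
    ∫ z, h z ∂orderedSample μ f n = ∫ z, h z ∂Measure.pi fun _ => μ := by
  let sorted : Set (Fin n → α) := {z | StrictMono (f ∘ z)}
  let chamber (σ : Equiv.Perm (Fin n)) : Set (Fin n → α) := (· ∘ σ) ⁻¹' sorted
  have hmeas (σ : Equiv.Perm (Fin n)) : MeasurableSet (chamber σ) :=
    (measurableSet_strictMono_comp hf).preimage (measurePreserving_comp_perm μ σ).measurable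
  have hdisj : Pairwise (Function.onFun Disjoint chamber) := fun σ τ hne =>
    disjoint_left.2 fun z hσ hτ => hne (perm_eq_of_strictMono_comp (y := f ∘ z) hσ hτ)
  have hcover : ⋃ σ, chamber σ =ᵐ[Measure.pi fun _ => μ] univ := by
    refine eventuallyEq_univ.2 ?_
    filter_upwards [ae_pi_injective_comp hf] with z hz
    exact mem_iUnion.2 (exists_perm_strictMono_comp hz)
  have integral_chamber (σ : Equiv.Perm (Fin n)) :
      ∫ z in chamber σ, h z ∂Measure.pi (fun _ => μ) =
        ∫ z in sorted, h z ∂Measure.pi fun _ => μ := by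
    simpa only [hsymm] using (measurePreserving_comp_perm μ σ).setIntegral_preimage_emb
      (measurableEmbedding_comp_perm σ) h sorted
  calc ∫ z, h z ∂orderedSample μ f n
      = ∑ _σ : Equiv.Perm (Fin n), ∫ z in sorted, h z ∂Measure.pi fun _ => μ := by
        simp [orderedSample, sorted, integral_smul_measure, Fintype.card_perm]
    _ = ∑ σ, ∫ z in chamber σ, h z ∂Measure.pi fun _ => μ :=
        Finset.sum_congr rfl fun σ _ => (integral_chamber σ).symm
    _ = ∫ z, h z ∂Measure.pi fun _ => μ := by
        rw [← integral_iUnion_fintype hmeas hdisj fun _ => hint.integrableOn,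
          setIntegral_congr_set hcover, setIntegral_univ]

lemma isProbabilityMeasure_orderedSample (hf : Measurable f) [NullSingletonClass (μ.map f)] :
    IsProbabilityMeasure (orderedSample μ f n) := by
  have h := integral_orderedSample (n := n) hf
    (integrable_const (μ := Measure.pi fun _ : Fin n => μ) (1 : ℝ)) fun _ _ => rfl
  rw [isProbabilityMeasure_iff_real]
  simpa using h

lemma integral_sum_orderedSample (hf : Measurable f) [NullSingletonClass (μ.map f)] {g : α → ℝ}
    (hg : Integrable g μ) : ∫ z, ∑ i, g (z i) ∂orderedSample μ f n = n * ∫ t, g t ∂μ := by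
  rw [integral_orderedSample hf (integrable_finsetSum _ fun i _ => integrable_comp_eval hg)
    fun z σ => Equiv.sum_comp σ fun i => g (z i),
    integral_finsetSum _ fun i _ => integrable_comp_eval hg]
  simp [integral_comp_eval (μ := fun _ : Fin n => μ) hg.aestronglyMeasurable]

end OrderedSamples

section Patterns

open Set

variable {n : ℕ}

/-- The event that `n` points of the plane realize the pattern `π` and are listed in order of
increasing abscissa; it is the event in the definition of `patternProb`. -/
def patternEvent (π : Equiv.Perm (Fin n)) : Set (Fin n → ℝ × ℝ) :=
  {p | ∀ i j, i < j → (p i).1 < (p j).1 ∧ ((p i).2 < (p j).2 ↔ π i < π j)}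

lemma measurableSet_patternEvent (π : Equiv.Perm (Fin n)) : MeasurableSet (patternEvent π) := by
  simp only [patternEvent, ofPred_forall, ofPred_and]
  refine .iInter fun i => .iInter fun j => .iInter fun _ => .inter ?_ ?_
  · exact measurableSet_lt (by fun_prop) (by fun_prop)
  · exact (measurableSet_lt (by fun_prop) (by fun_prop)).iff (.const _)

lemma mem_patternEvent_iff {π : Equiv.Perm (Fin n)} {p : Fin n → ℝ × ℝ}
    (hp : Function.Injective fun i => (p i).2) :
    p ∈ patternEvent π ↔
      StrictMono (fun i => (p i).1) ∧ StrictMono (fun i => (p (π.symm i)).2) := by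
  refine ⟨fun h => ⟨fun i j hij => (h i j hij).1, fun a b hab => ?_⟩, fun ⟨h1, h2⟩ i j hij =>
    ⟨h1 hij, by simpa using h2.lt_iff_lt (a := π i) (b := π j)⟩⟩
  obtain ⟨i, rfl⟩ := π.surjective a
  obtain ⟨j, rfl⟩ := π.surjective b
  simp only [Equiv.symm_apply_apply]
  rcases lt_trichotomy i j with hij | rfl | hji
  · exact (h i j hij).2.2 hab
  · exact absurd hab (lt_irrefl _)
  · exact (not_lt.1 (mt (h j i hji).2.1 hab.not_gt)).lt_of_ne (hp.ne hji.ne')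

lemma patternProb_map_graph {μ : Measure ℝ} [IsProbabilityMeasure μ] {f : ℝ → ℝ}
    (hf : Measurable f) [NullSingletonClass (μ.map f)] (π : Equiv.Perm (Fin n)) :
    patternProb (μ.map fun t => (t, f t)) π =
      (orderedSample μ f n).real {z | StrictMono (z ∘ π)} := by
  have hgraph : Measurable fun t => (t, f t) := measurable_id.prodMk hf
  have := Measure.isProbabilityMeasure_map (μ := μ) hgraph.aemeasurable
  have hpi := measurePreserving_pi (fun _ : Fin n => μ) (fun _ => μ.map fun t => (t, f t))
    fun _ => hgraph.measurePreserving μ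
  have perm_invariance := (measurePreserving_comp_perm μ π.symm).measure_preimage_emb
    (measurableEmbedding_comp_perm π.symm) ({z | StrictMono (z ∘ π)} ∩ {z | StrictMono (f ∘ z)})
  have hevent : (Measure.pi fun _ => μ.map fun t => (t, f t)) (patternEvent π) =
      (Measure.pi fun _ => μ) ({z | StrictMono (z ∘ π)} ∩ {z | StrictMono (f ∘ z)}) := by
    rw [← hpi.measure_preimage (measurableSet_patternEvent π).nullMeasurableSet, ← perm_invariance]
    refine measure_congr ?_
    filter_upwards [ae_pi_injective_comp hf] with z hz
    refine propext ((mem_patternEvent_iff (p := fun i => (z i, f (z i))) hz).trans ?_)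
    change _ ↔ StrictMono ((z ∘ π.symm) ∘ π) ∧ StrictMono (f ∘ z ∘ π.symm)
    simp [Function.comp_def]
  have hsorted : MeasurableSet {z : Fin n → ℝ | StrictMono (z ∘ π)} :=
    measurableSet_strictMono.preimage (measurePreserving_comp_perm μ π).measurable
  rw [Measure.real, orderedSample, Measure.smul_apply, Measure.restrict_apply hsorted, ← hevent]
  simp [patternProb, patternEvent]

end Patterns

section FinitePartition

variable {α ι : Type*} [MeasurableSpace α] {ν : Measure α} [IsFiniteMeasure ν] {s : Finset ι}
  {A : ι → Set α} {h : α → ℝ} {a : ι → ℝ}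

lemma integrable_of_ae_mem_finite_partition (hA : ∀ i ∈ s, MeasurableSet (A i))
    (hcover : ∀ᵐ z ∂ν, ∃ i ∈ s, z ∈ A i) (hh : ∀ i ∈ s, Set.EqOn h (fun _ => a i) (A i)) :
    Integrable h ν := by
  have hrestrict : ν.restrict (⋃ i ∈ s, A i) = ν :=
    Measure.restrict_eq_self_of_ae_mem (hcover.mono fun z hz => by simpa using hz)
  rw [← hrestrict]
  exact integrableOn_finset_iUnion.2 fun i hi =>
    (integrableOn_const (measure_ne_top ν _)).congr_fun (hh i hi).symm (hA i hi)

lemma integral_eq_sum_of_ae_mem_finite_partition (hA : ∀ i ∈ s, MeasurableSet (A i))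
    (hdisj : (s : Set ι).PairwiseDisjoint A) (hcover : ∀ᵐ z ∂ν, ∃ i ∈ s, z ∈ A i)
    (hh : ∀ i ∈ s, Set.EqOn h (fun _ => a i) (A i)) :
    ∫ z, h z ∂ν = ∑ i ∈ s, ν.real (A i) * a i := by
  have hrestrict : ν.restrict (⋃ i ∈ s, A i) = ν :=
    Measure.restrict_eq_self_of_ae_mem (hcover.mono fun z hz => by simpa using hz)
  have hint := integrable_of_ae_mem_finite_partition hA hcover hh
  conv_lhs => rw [← hrestrict]
  rw [integral_biUnion_finset s hA hdisj fun i _ => hint.integrableOn]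
  refine Finset.sum_congr rfl fun i hi => ?_
  rw [setIntegral_congr_fun (hA i hi) (hh i hi), setIntegral_const, smul_eq_mul]

end FinitePartition

section PiecewiseAffine

open Set

lemma measurePi_smul {ι : Type*} [Fintype ι] {X : ι → Type*} [∀ i, MeasurableSpace (X i)]
    (ν : ∀ i, Measure (X i)) [∀ i, SigmaFinite (ν i)] (a : ι → NNReal) :
    (Measure.pi fun i => a i • ν i) = (∏ i, a i) • Measure.pi ν := by
  refine Measure.pi_eq fun s _ => ?_
  simp only [Measure.smul_apply, Measure.pi_pi, ENNReal.smul_def, smul_eq_mul,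
    Finset.prod_mul_distrib, ENNReal.ofNNReal_finsetProd]

/-- Lebesgue measure on `[0, 1]`. -/
noncomputable abbrev unitLebesgue : Measure ℝ := volume.restrict (Icc 0 1)

instance : IsProbabilityMeasure unitLebesgue := ⟨by simp⟩

/-- The map `f` is affine with slope `s j ≠ 0` on each of the disjoint open intervals `I j`, which
exhaust `[0, 1]` up to a null set. Nothing is required of `f` at the endpoints of the intervals, so
`f` may jump there. -/
structure IsPiecewiseAffine {ι : Type*} (f : ℝ → ℝ) (I : ι → Set ℝ) (s c : ι → ℝ) : Prop where
  isOpen : ∀ j, IsOpen (I j)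
  ordConnected : ∀ j, (I j).OrdConnected
  subset_Icc : ∀ j, I j ⊆ Icc 0 1
  pairwise_disjoint : Pairwise (Function.onFun Disjoint I)
  ae_mem : ∀ᵐ t ∂unitLebesgue, ∃ j, t ∈ I j
  slope_ne_zero : ∀ j, s j ≠ 0
  eq_affine : ∀ j, ∀ t ∈ I j, f t = c j + s j * t

lemma map_affineHomeomorph_volume {a : ℝ} (b : ℝ) (ha : a ≠ 0) :
    volume.map (affineHomeomorph a b ha) = ‖a‖₊⁻¹ • (volume : Measure ℝ) := by
  have hcomp : ⇑(affineHomeomorph a b ha) = (· + b) ∘ (a * ·) := rfl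
  rw [hcomp, ← Measure.map_map (by fun_prop) (by fun_prop), Real.map_volume_mul_left ha,
    Measure.map_smul, map_add_right_eq_self, ← Real.norm_eq_abs, ofReal_norm, ← nnnorm_inv]
  rfl

namespace IsPiecewiseAffine

variable {ι : Type*} {f : ℝ → ℝ} {I : ι → Set ℝ} {s c : ι → ℝ} (hI : IsPiecewiseAffine f I s c)

include hI

lemma image_eq (j : ι) : f '' I j = affineHomeomorph (s j) (c j) (hI.slope_ne_zero j) '' I j :=
  image_congr fun t ht => by
    rw [hI.eq_affine j t ht, affineHomeomorph_apply, add_comm]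

lemma isOpen_image (j : ι) : IsOpen (f '' I j) := by
  rw [hI.image_eq]
  exact (Homeomorph.isOpenMap _) _ (hI.isOpen j)

lemma ordConnected_image (j : ι) : (f '' I j).OrdConnected := by
  rw [hI.image_eq]
  exact ((hI.ordConnected j).isPreconnected.image _
    (Homeomorph.continuous _).continuousOn).ordConnected

lemma map_volume_restrict (j : ι) :
    (volume.restrict (I j)).map f = ‖s j‖₊⁻¹ • volume.restrict (f '' I j) := by
  have ψ_eq : f =ᵐ[volume.restrict (I j)] affineHomeomorph (s j) (c j) (hI.slope_ne_zero j) := by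
    filter_upwards [ae_restrict_mem (hI.isOpen j).measurableSet] with t ht
    rw [hI.eq_affine j t ht, affineHomeomorph_apply, add_comm]
  rw [Measure.map_congr ψ_eq, hI.image_eq, ← Measure.restrict_smul,
    ← map_affineHomeomorph_volume (c j), (Homeomorph.measurableEmbedding _).restrict_map,
    Set.preimage_image_eq _ (Homeomorph.injective _)]

lemma map_unitLebesgue_restrict (hf : MeasurePreserving f unitLebesgue unitLebesgue) (j : ι) :
    (unitLebesgue.restrict (I j)).map f = ‖s j‖₊⁻¹ • unitLebesgue.restrict (f '' I j) := by
  have himage : (volume.restrict (I j)).map f ≤ unitLebesgue :=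
    (Measure.map_mono (Measure.restrict_mono_set _ (hI.subset_Icc j)) hf.measurable).trans
      hf.map_eq.le
  have hmem : ∀ᵐ y ∂(volume.restrict (I j)).map f, y ∈ Icc (0 : ℝ) 1 :=
    (ae_mono himage) (ae_restrict_mem measurableSet_Icc)
  rw [Measure.restrict_restrict_of_subset (hI.subset_Icc j),
    ← Measure.restrict_eq_self_of_ae_mem hmem, hI.map_volume_restrict, Measure.restrict_smul,
    Measure.restrict_comm (hI.isOpen_image j).measurableSet]

variable [Fintype ι]

lemma sum_volume_restrict : ∑ j, volume.restrict (I j) = unitLebesgue := by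
  have hae : ∀ᵐ t ∂unitLebesgue, t ∈ ⋃ j, I j := hI.ae_mem.mono fun t ht => mem_iUnion.2 ht
  rw [← Measure.sum_fintype, ← Measure.restrict_iUnion hI.pairwise_disjoint
    fun j => (hI.isOpen j).measurableSet, ← Measure.restrict_eq_self_of_ae_mem hae,
    Measure.restrict_restrict_of_subset (iUnion_subset hI.subset_Icc)]

lemma sum_inv_slope_smul_restrict_image (hf : MeasurePreserving f unitLebesgue unitLebesgue) :
    ∑ j, ‖s j‖₊⁻¹ • volume.restrict (f '' I j) = unitLebesgue := by
  simp_rw [← hI.map_volume_restrict]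
  rw [← Measure.map_finset_sum hf.measurable.aemeasurable, hI.sum_volume_restrict, hf.map_eq]

open Classical in
/- For almost every `y` this holds because `f` preserves Lebesgue measure. It then holds for every
`y`: the images of the pieces are open, so near `y` the sum is at least its value at `y`. -/
lemma sum_inv_slope_le_one (hf : MeasurePreserving f unitLebesgue unitLebesgue) (y : ℝ) :
    ∑ j with y ∈ f '' I j, ‖s j‖₊⁻¹ ≤ 1 := by
  let F : Finset ι := {j | y ∈ f '' I j}
  let U : Set ℝ := Metric.ball y 1 ∩ ⋂ j ∈ F, f '' I j
  have hU : IsOpen U :=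
    Metric.isOpen_ball.inter (isOpen_biInter_finset fun j _ => hI.isOpen_image j)
  have hyU : y ∈ U :=
    ⟨Metric.mem_ball_self one_pos, mem_iInter₂.2 fun j hj => by simpa [F] using hj⟩
  have hU_pos : volume U ≠ 0 := (hU.measure_pos volume ⟨y, hyU⟩).ne'
  have hU_fin : volume U ≠ ⊤ := measure_ne_top_of_subset inter_subset_left measure_ball_ne_top
  have hle : ((∑ j ∈ F, ‖s j‖₊⁻¹ : NNReal) : ENNReal) * volume U ≤ 1 * volume U := by
    calc ((∑ j ∈ F, ‖s j‖₊⁻¹ : NNReal) : ENNReal) * volume U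
        = ∑ j ∈ F, (‖s j‖₊⁻¹ • volume.restrict (f '' I j)) U := by
          rw [ENNReal.ofNNReal_finsetSum, Finset.sum_mul]
          refine Finset.sum_congr rfl fun j hj => ?_
          have hsub : U ⊆ f '' I j := fun t ht => mem_iInter₂.1 ht.2 j hj
          rw [Measure.smul_apply, Measure.restrict_eq_self _ hsub]
          rfl
      _ ≤ ∑ j, (‖s j‖₊⁻¹ • volume.restrict (f '' I j)) U :=
          Finset.sum_le_sum_of_subset (Finset.subset_univ F)
      _ = unitLebesgue U := by
          rw [← hI.sum_inv_slope_smul_restrict_image hf, Measure.finsetSum_apply]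
      _ ≤ 1 * volume U := (Measure.restrict_apply_le _ _).trans (one_mul _).ge
  exact_mod_cast (ENNReal.mul_le_mul_iff_left hU_pos hU_fin).1 hle

end IsPiecewiseAffine

end PiecewiseAffine

section Itineraries

open Set

lemma lt_of_disjoint_ordConnected {α : Type*} [LinearOrder α] {S T : Set α} (hS : S.OrdConnected)
    (hT : T.OrdConnected) (hdisj : Disjoint S T) {a b a' b' : α} (ha : a ∈ S) (hb : b ∈ T)
    (ha' : a' ∈ S) (hb' : b' ∈ T) (hab : a < b) : a' < b' := by
  by_contra! hle
  rcases le_total a b' with h | h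
  · exact disjoint_left.1 hdisj (hS.out ha ha' ⟨h, hle⟩) hb'
  · exact disjoint_left.1 hdisj ha (hT.out hb' hb ⟨h, hab.le⟩)

/-- The ordered samples with itinerary `w`: the points `z i ∈ I (w i)` whose images under `f` are
increasing. -/
def itineraryCell {ι : Type*} {n : ℕ} (f : ℝ → ℝ) (I : ι → Set ℝ) (w : Fin n → ι) :
    Set (Fin n → ℝ) :=
  {z | (∀ i, z i ∈ I (w i)) ∧ StrictMono (f ∘ z)}

namespace IsPiecewiseAffine

variable {ι : Type*} {f : ℝ → ℝ} {I : ι → Set ℝ} {s c : ι → ℝ} (hI : IsPiecewiseAffine f I s c)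
  {n : ℕ}

include hI

lemma strictMonoOn_or_strictAntiOn (j : ι) : StrictMonoOn f (I j) ∨ StrictAntiOn f (I j) := by
  rcases (hI.slope_ne_zero j).lt_or_gt with hs | hs
  · refine .inr fun t ht u hu htu => ?_
    rw [hI.eq_affine j t ht, hI.eq_affine j u hu]
    gcongr ?_ + ?_
    exact mul_lt_mul_of_neg_left htu hs
  · refine .inl fun t ht u hu htu => ?_
    rw [hI.eq_affine j t ht, hI.eq_affine j u hu]
    gcongr

lemma eq_of_mem {t : ℝ} {i j : ι} (hi : t ∈ I i) (hj : t ∈ I j) : i = j :=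
  by_contra fun hij => disjoint_left.1 (hI.pairwise_disjoint hij) hi hj

lemma pairwise_disjoint_itineraryCell :
    Pairwise (Function.onFun Disjoint (itineraryCell (n := n) f I)) := fun _ _ hne =>
  disjoint_left.2 fun _ hz hz' => hne (funext fun i => hI.eq_of_mem (hz.1 i) (hz'.1 i))

lemma measurableSet_itineraryCell (hf : Measurable f) (w : Fin n → ι) :
    MeasurableSet (itineraryCell f I w) := by
  have hbox : {z : Fin n → ℝ | ∀ i, z i ∈ I (w i)} = univ.pi fun i => I (w i) := by
    ext; simp
  refine MeasurableSet.inter (s₁ := {z | ∀ i, z i ∈ I (w i)}) ?_ (measurableSet_strictMono_comp hf)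
  exact hbox ▸ .univ_pi fun i => (hI.isOpen (w i)).measurableSet

lemma ae_mem_itineraryCell (hf : Measurable f) :
    ∀ᵐ z ∂orderedSample unitLebesgue f n, ∃ w, z ∈ itineraryCell f I w := by
  filter_upwards [ae_orderedSample_of_ae hI.ae_mem, ae_orderedSample_strictMono hf] with z hz hmono
  choose w hw using hz
  exact ⟨w, hw, hmono⟩

lemma lt_of_mem_itineraryCell {w : Fin n → ι} {z z' : Fin n → ℝ}
    (hz : z ∈ itineraryCell f I w) (hz' : z' ∈ itineraryCell f I w) {i j : Fin n}
    (hij : z i < z j) : z' i < z' j := by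
  rcases eq_or_ne (w i) (w j) with heq | hne
  · have hi := heq ▸ hz.1 i
    have hi' := heq ▸ hz'.1 i
    rcases hI.strictMonoOn_or_strictAntiOn (w j) with hmono | hanti
    · rw [← hmono.lt_iff_lt hi' (hz'.1 j)]
      exact hz'.2 (hz.2.lt_iff_lt.1 (hmono hi (hz.1 j) hij))
    · rw [← hanti.lt_iff_gt (hz'.1 j) hi']
      exact hz'.2 (hz.2.lt_iff_lt.1 (hanti hi (hz.1 j) hij))
  · exact lt_of_disjoint_ordConnected (hI.ordConnected _) (hI.ordConnected _)
      (hI.pairwise_disjoint hne) (hz.1 i) (hz.1 j) (hz'.1 i) (hz'.1 j) hij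

lemma exists_perm_strictMono_of_mem_itineraryCell (w : Fin n → ι) :
    ∃ σ : Equiv.Perm (Fin n), ∀ z ∈ itineraryCell f I w, StrictMono (z ∘ σ) := by
  rcases (itineraryCell f I w).eq_empty_or_nonempty with hempty | ⟨z₀, hz₀⟩
  · simp [hempty]
  · obtain ⟨σ, hσ⟩ := exists_perm_strictMono_comp hz₀.2.injective.of_comp
    exact ⟨σ, fun z hz i j hij => hI.lt_of_mem_itineraryCell hz₀ hz (hσ hij)⟩

lemma ordConnected_preimage_itinerary {w : Fin n → ι} {z : Fin n → ℝ}
    (hz : z ∈ itineraryCell f I w) {σ : Equiv.Perm (Fin n)} (hσ : StrictMono (z ∘ σ)) (j : ι) :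
    (w ∘ σ ⁻¹' {j}).OrdConnected := by
  have hpre : w ∘ σ ⁻¹' {j} = z ∘ σ ⁻¹' I j := by
    ext i
    refine ⟨fun h => ?_, fun h => hI.eq_of_mem (hz.1 (σ i)) h⟩
    rw [mem_preimage, mem_singleton_iff, Function.comp_apply] at h
    exact h ▸ hz.1 (σ i)
  exact hpre ▸ (hI.ordConnected j).preimage_mono hσ.monotone

lemma pi_itineraryCell_le (hf : MeasurePreserving f unitLebesgue unitLebesgue) (w : Fin n → ι) :
    (Measure.pi fun _ => unitLebesgue) (itineraryCell f I w) ≤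
      ((∏ i, ‖s (w i)‖₊⁻¹ : NNReal) : ENNReal) *
        (Measure.pi fun _ => unitLebesgue) {y : Fin n → ℝ | StrictMono y} := by
  have hmap : MeasurePreserving (fun (z : Fin n → ℝ) i => f (z i))
      ((Measure.pi fun _ => unitLebesgue).restrict (univ.pi fun i => I (w i)))
      ((∏ i, ‖s (w i)‖₊⁻¹) • (Measure.pi fun _ => unitLebesgue).restrict
        (univ.pi fun i => f '' I (w i))) := by
    rw [Measure.restrict_pi_pi, Measure.restrict_pi_pi, ← measurePi_smul]
    exact measurePreserving_pi _ _ fun i => ⟨hf.measurable, hI.map_unitLebesgue_restrict hf (w i)⟩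
  have hcell : itineraryCell f I w =
      (fun (z : Fin n → ℝ) i => f (z i)) ⁻¹' {y | StrictMono y} ∩ univ.pi fun i => I (w i) := by
    ext z
    rw [mem_inter_iff, mem_univ_pi, and_comm]
    rfl
  have hbox : MeasurableSet (univ.pi fun i => I (w i)) :=
    .univ_pi fun i => (hI.isOpen (w i)).measurableSet
  rw [hcell, ← Measure.restrict_apply' hbox,
    hmap.measure_preimage measurableSet_strictMono.nullMeasurableSet, Measure.smul_apply]
  exact mul_le_mul_right (Measure.restrict_apply_le _ _) _

lemma measureReal_itineraryCell_le (hf : MeasurePreserving f unitLebesgue unitLebesgue)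
    (w : Fin n → ι) :
    (orderedSample unitLebesgue f n).real (itineraryCell f I w) ≤ ∏ i, |s (w i)|⁻¹ := by
  have : NullSingletonClass (unitLebesgue.map id) := by rw [Measure.map_id]; infer_instance
  have total : (n.factorial : ENNReal) *
      (Measure.pi fun _ => unitLebesgue) {y : Fin n → ℝ | StrictMono y} = 1 := by
    have := isProbabilityMeasure_orderedSample (μ := unitLebesgue) (n := n) measurable_id
    simpa [orderedSample] using measure_univ (μ := orderedSample unitLebesgue id n)
  have hle : orderedSample unitLebesgue f n (itineraryCell f I w) ≤
      ((∏ i, ‖s (w i)‖₊⁻¹ : NNReal) : ENNReal) := by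
    calc orderedSample unitLebesgue f n (itineraryCell f I w)
        = n.factorial * (Measure.pi fun _ => unitLebesgue) (itineraryCell f I w) := by
          rw [orderedSample, Measure.smul_apply, Measure.restrict_eq_self _ fun z hz => hz.2,
            smul_eq_mul]
      _ ≤ n.factorial * (((∏ i, ‖s (w i)‖₊⁻¹ : NNReal) : ENNReal) *
            (Measure.pi fun _ => unitLebesgue) {y : Fin n → ℝ | StrictMono y}) := by
          gcongr
          exact hI.pi_itineraryCell_le hf w
      _ = ((∏ i, ‖s (w i)‖₊⁻¹ : NNReal) : ENNReal) := by
          rw [mul_left_comm, total, mul_one]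
  have := ENNReal.toReal_mono ENNReal.coe_ne_top hle
  simpa [Measure.real] using this

end IsPiecewiseAffine

end Itineraries

section LogDerivative

open Set

namespace IsPiecewiseAffine

variable {ι : Type*} {f : ℝ → ℝ} {I : ι → Set ℝ} {s c : ι → ℝ} (hI : IsPiecewiseAffine f I s c)

include hI

lemma deriv_eq {j : ι} {t : ℝ} (ht : t ∈ I j) : deriv f t = s j := by
  have heq : f =ᶠ[nhds t] fun u => c j + s j * u :=
    ((hI.isOpen j).eventually_mem ht).mono (hI.eq_affine j)
  rw [heq.deriv_eq]
  simp

lemma eqOn_log_abs_deriv (j : ι) :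
    EqOn (fun t => Real.log |deriv f t|) (fun _ => Real.log |s j|) (I j) := fun _ ht =>
  congrArg (fun a => Real.log |a|) (hI.deriv_eq ht)

lemma integrable_log_abs_deriv [Finite ι] :
    Integrable (fun t => Real.log |deriv f t|) unitLebesgue := by
  cases nonempty_fintype ι
  exact integrable_of_ae_mem_finite_partition (s := Finset.univ)
    (fun j _ => (hI.isOpen j).measurableSet) (by simpa using hI.ae_mem)
    fun j _ => hI.eqOn_log_abs_deriv j

lemma integral_log_abs_deriv [Fintype ι] :
    ∫ t in Icc 0 1, Real.log |deriv f t| = ∑ j, volume.real (I j) * Real.log |s j| := by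
  rw [integral_eq_sum_of_ae_mem_finite_partition (s := Finset.univ)
    (fun j _ => (hI.isOpen j).measurableSet) (hI.pairwise_disjoint.set_pairwise _)
    (by simpa using hI.ae_mem) fun j _ => hI.eqOn_log_abs_deriv j]
  refine Finset.sum_congr rfl fun j _ => ?_
  rw [measureReal_restrict_apply (hI.isOpen j).measurableSet,
    inter_eq_self_of_subset_left (hI.subset_Icc j)]

end IsPiecewiseAffine

end LogDerivative

section SamplingEntropy

open Set

open Classical in
/-- The words of length `n` that are the itinerary of at least one ordered sample. -/
noncomputable def admissibleWords {ι : Type*} [Fintype ι] (f : ℝ → ℝ) (I : ι → Set ℝ) (n : ℕ) :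
    Finset (Fin n → ι) :=
  {w | (itineraryCell f I w).Nonempty}

lemma mem_admissibleWords {ι : Type*} [Fintype ι] {f : ℝ → ℝ} {I : ι → Set ℝ} {n : ℕ}
    {w : Fin n → ι} : w ∈ admissibleWords f I n ↔ (itineraryCell f I w).Nonempty := by
  simp [admissibleWords]

namespace IsPiecewiseAffine

variable {ι : Type*} [Fintype ι] {f : ℝ → ℝ} {I : ι → Set ℝ} {s c : ι → ℝ}
  (hI : IsPiecewiseAffine f I s c) {n : ℕ}

include hI

lemma integral_orderedSample_eq_sum (hf : Measurable f) {h : (Fin n → ℝ) → ℝ}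
    {a : (Fin n → ι) → ℝ} (hh : ∀ w, EqOn h (fun _ => a w) (itineraryCell f I w)) :
    ∫ z, h z ∂orderedSample unitLebesgue f n = ∑ w ∈ admissibleWords f I n,
      (orderedSample unitLebesgue f n).real (itineraryCell f I w) * a w := by
  refine integral_eq_sum_of_ae_mem_finite_partition
    (fun w _ => hI.measurableSet_itineraryCell hf w)
    (hI.pairwise_disjoint_itineraryCell.set_pairwise _) ?_ fun w _ => hh w
  filter_upwards [hI.ae_mem_itineraryCell hf] with z ⟨w, hw⟩
  exact ⟨w, mem_admissibleWords.2 ⟨z, hw⟩, hw⟩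

lemma sum_measureReal_itineraryCell (hf : MeasurePreserving f unitLebesgue unitLebesgue) :
    ∑ w ∈ admissibleWords f I n,
      (orderedSample unitLebesgue f n).real (itineraryCell f I w) = 1 := by
  have : NullSingletonClass (unitLebesgue.map f) := by rw [hf.map_eq]; infer_instance
  have := isProbabilityMeasure_orderedSample (μ := unitLebesgue) (n := n) hf.measurable
  simpa using (hI.integral_orderedSample_eq_sum (n := n) (h := 1) (a := 1) hf.measurable
    fun _ _ _ => rfl).symm

lemma sum_measureReal_itineraryCell_mul_neg_log
    (hf : MeasurePreserving f unitLebesgue unitLebesgue) :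
    ∑ w ∈ admissibleWords f I n, (orderedSample unitLebesgue f n).real (itineraryCell f I w) *
      -Real.log (∏ i, |s (w i)|⁻¹) = n * ∫ t in Icc 0 1, Real.log |deriv f t| := by
  have : NullSingletonClass (unitLebesgue.map f) := by rw [hf.map_eq]; infer_instance
  rw [← integral_sum_orderedSample hf.measurable hI.integrable_log_abs_deriv,
    hI.integral_orderedSample_eq_sum hf.measurable fun w z hz => ?_]
  rw [Real.log_prod fun i _ => inv_ne_zero (abs_ne_zero.2 (hI.slope_ne_zero _)),
    ← Finset.sum_neg_distrib]
  refine Finset.sum_congr rfl fun i _ => ?_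
  rw [hI.deriv_eq (hz.1 i), Real.log_inv, neg_neg]

lemma patternProb_graphPermuton (hf : MeasurePreserving f unitLebesgue unitLebesgue)
    {sorting : (Fin n → ι) → Equiv.Perm (Fin n)}
    (hsorting : ∀ w, ∀ z ∈ itineraryCell f I w, StrictMono (z ∘ sorting w))
    (π : Equiv.Perm (Fin n)) :
    patternProb (graphPermuton f) π = ∑ w ∈ admissibleWords f I n with sorting w = π,
      (orderedSample unitLebesgue f n).real (itineraryCell f I w) := by
  have : NullSingletonClass (unitLebesgue.map f) := by rw [hf.map_eq]; infer_instance
  have hmeas : MeasurableSet {z : Fin n → ℝ | StrictMono (z ∘ π)} :=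
    measurableSet_strictMono.preimage (measurePreserving_comp_perm unitLebesgue π).measurable
  rw [graphPermuton, patternProb_map_graph hf.measurable, ← integral_indicator_one hmeas,
    hI.integral_orderedSample_eq_sum hf.measurable (a := fun w => if sorting w = π then 1 else 0)
      fun w z hz => ?_]
  · simp [Finset.sum_filter]
  · have hiff : StrictMono (z ∘ π) ↔ sorting w = π :=
      ⟨fun h => perm_eq_of_strictMono_comp (hsorting w z hz) h, fun h => h ▸ hsorting w z hz⟩
    simp [indicator_apply, hiff]

lemma card_admissibleWords_filter_sorting_le {sorting : (Fin n → ι) → Equiv.Perm (Fin n)}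
    (hsorting : ∀ w, ∀ z ∈ itineraryCell f I w, StrictMono (z ∘ sorting w))
    (π : Equiv.Perm (Fin n)) :
    Finset.card {w ∈ admissibleWords f I n | sorting w = π} ≤ (n + 1) ^ (2 * Fintype.card ι) := by
  refine card_le_of_ordConnected_preimage π fun w hw j => ?_
  obtain ⟨hadm, rfl⟩ := Finset.mem_filter.1 hw
  obtain ⟨z, hz⟩ := mem_admissibleWords.1 hadm
  exact hI.ordConnected_preimage_itinerary hz (hsorting w z hz) j

lemma sum_admissibleWords_prod_le (hf : MeasurePreserving f unitLebesgue unitLebesgue) (n : ℕ) :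
    ∑ w ∈ admissibleWords f I n, ∏ i, |s (w i)|⁻¹ ≤ ((n : ℝ) + 1) ^ (2 * Fintype.card ι) := by
  classical
  refine sum_prod_le_of_monotone_selection (J := fun j => f '' I j) (a := fun j => |s j|⁻¹)
    hI.ordConnected_image (fun j => by positivity) (fun y => ?_) fun w hw => ?_
  · simpa using NNReal.coe_le_coe.2 (hI.sum_inv_slope_le_one hf y)
  · obtain ⟨z, hz⟩ := mem_admissibleWords.1 hw
    exact ⟨f ∘ z, hz.2.monotone, fun i => mem_image_of_mem f (hz.1 i)⟩

theorem abs_samplingEntropy_sub_le (hf : MeasurePreserving f unitLebesgue unitLebesgue) (n : ℕ) :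
    |samplingEntropy (graphPermuton f) n - n * (∫ t in Icc 0 1, Real.log |deriv f t|)| ≤
      2 * Fintype.card ι * Real.log (n + 1) := by
  classical
  choose sorting hsorting using hI.exists_perm_strictMono_of_mem_itineraryCell (n := n)
  have key := abs_sum_negMulLog_fiberwise_sub_le sorting
    (fun w _ => measureReal_nonneg)
    (fun w _ => Finset.prod_pos fun i _ => inv_pos.2 (abs_pos.2 (hI.slope_ne_zero (w i))))
    (fun w _ => hI.measureReal_itineraryCell_le hf w) (hI.sum_measureReal_itineraryCell hf)
    (hI.sum_admissibleWords_prod_le hf n)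
    fun π => mod_cast hI.card_admissibleWords_filter_sorting_le hsorting π
  simp only [← hI.patternProb_graphPermuton hf hsorting] at key
  rw [hI.sum_measureReal_itineraryCell_mul_neg_log hf, Real.log_pow] at key
  exact_mod_cast key

end IsPiecewiseAffine

lemma tendsto_div_of_abs_sub_le_log {u : ℕ → ℝ} {L C : ℝ}
    (hu : ∀ n : ℕ, |u n - n * L| ≤ C * Real.log (n + 1)) :
    Tendsto (fun n : ℕ => u n / n) atTop (nhds L) := by
  have hlog : Tendsto (fun n : ℕ => C * (Real.log (n + 1) / n)) atTop (nhds 0) := by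
    have := (Real.tendsto_pow_log_div_mul_add_atTop 1 (-1) 1 one_ne_zero).comp
      (tendsto_natCast_atTop_atTop.comp (tendsto_add_atTop_nat 1))
    simpa [Function.comp_def] using this.const_mul C
  refine tendsto_iff_norm_sub_tendsto_zero.2
    (squeeze_zero' (.of_forall fun _ => norm_nonneg _) ?_ hlog)
  filter_upwards [eventually_gt_atTop 0] with n hn
  have hn' : (0 : ℝ) < n := mod_cast hn
  calc ‖u n / n - L‖ = |u n - n * L| / n := by
        rw [Real.norm_eq_abs, ← abs_of_pos hn', ← abs_div, abs_of_pos hn', sub_div,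
          mul_div_cancel_left₀ L hn'.ne']
    _ ≤ C * (Real.log (n + 1) / n) := by
        rw [← mul_div_assoc]
        gcongr
        exact hu n

theorem samplingEntropy_div_tendsto_of_piecewiseAffine_general {ι : Type*} [Fintype ι] {f : ℝ → ℝ}
    {I : ι → Set ℝ} {s c : ι → ℝ} (hI : IsPiecewiseAffine f I s c)
    (hf : MeasurePreserving f unitLebesgue unitLebesgue) :
    Tendsto (fun n : ℕ => samplingEntropy (graphPermuton f) n / n) atTop
      (nhds (∑ j, volume.real (I j) * Real.log |s j|)) := by
  rw [← hI.integral_log_abs_deriv]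
  exact tendsto_div_of_abs_sub_le_log (hI.abs_samplingEntropy_sub_le hf)

end SamplingEntropy

section Breakpoints

open Set

variable {k : ℕ} {x : Fin (k + 1) → ℝ}

lemma exists_mem_Ioo_of_notMem_range {t : ℝ} (ht0 : x 0 ≤ t) (ht1 : t ≤ x (Fin.last k))
    (ht : t ∉ range x) : ∃ i : Fin k, t ∈ Ioo (x i.castSucc) (x i.succ) := by
  have search (j : Fin (k + 1)) : t < x j → ∃ i : Fin k, t ∈ Ioo (x i.castSucc) (x i.succ) := by
    induction j using Fin.induction with
    | zero => exact fun h => absurd h ht0.not_gt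
    | succ i ih =>
      intro h
      rcases lt_trichotomy t (x i.castSucc) with hlt | heq | hgt
      · exact ih hlt
      · exact absurd ⟨_, heq.symm⟩ ht
      · exact ⟨i, hgt, h⟩
  exact search (Fin.last k) (ht1.lt_of_ne fun h => ht ⟨_, h.symm⟩)

lemma pairwise_disjoint_Ioo_castSucc_succ (hx : Monotone x) :
    Pairwise (Function.onFun Disjoint fun i : Fin k => Ioo (x i.castSucc) (x i.succ)) :=
  fun i j hij => by
    simpa [Function.onFun] using
      hx.pairwise_disjoint_on_Ioo_succ.comp_of_injective (Fin.castSucc_injective k) hij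

lemma IsPiecewiseAffine.of_breakpoints {f : ℝ → ℝ} (hx0 : x 0 = 0) (hxk : x (Fin.last k) = 1)
    (hx : Monotone x) {s c : Fin k → ℝ} (hs : ∀ i, s i ≠ 0)
    (haff : ∀ i, ∀ t ∈ Ioo (x i.castSucc) (x i.succ), f t = c i + s i * t) :
    IsPiecewiseAffine f (fun i : Fin k => Ioo (x i.castSucc) (x i.succ)) s c where
  isOpen _ := isOpen_Ioo
  ordConnected _ := ordConnected_Ioo
  subset_Icc i := Ioo_subset_Icc_self.trans
    (Icc_subset_Icc (hx0 ▸ hx (Fin.zero_le _)) (hxk ▸ hx (Fin.le_last _)))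
  pairwise_disjoint := pairwise_disjoint_Ioo_castSucc_succ hx
  ae_mem := by
    filter_upwards [ae_restrict_mem measurableSet_Icc,
      (countable_range x).ae_notMem unitLebesgue] with t ht hrange
    exact exists_mem_Ioo_of_notMem_range (hx0 ▸ ht.1) (hxk ▸ ht.2) hrange
  slope_ne_zero := hs
  eq_affine := haff

end Breakpoints

/-- If f : [0,1] → [0,1] preserves Lebesgue measure and is piecewise affine with nonzero
slopes s_i on the pieces [x_{i-1}, x_i], then
H_n(μ_f)/n → ∑ᵢ (xᵢ - xᵢ₋₁) log |sᵢ| = ∫₀¹ log |f'|. -/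
theorem samplingEntropy_div_tendsto_of_piecewiseAffine
    (f : ℝ → ℝ) (hmeas : Measurable f)
    (hmaps : Set.MapsTo f (Set.Icc (0:ℝ) 1) (Set.Icc (0:ℝ) 1))
    (hmp : Measure.map f (volume.restrict (Set.Icc (0:ℝ) 1)) =
      volume.restrict (Set.Icc (0:ℝ) 1))
    (k : ℕ) (x : Fin (k + 1) → ℝ) (hx0 : x 0 = 0) (hxk : x (Fin.last k) = 1)
    (hmono : StrictMono x)
    (s c : Fin k → ℝ) (hs : ∀ i, s i ≠ 0)
    (haff : ∀ i : Fin k, ∀ t ∈ Set.Icc (x i.castSucc) (x i.succ), f t = c i + s i * t) :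
    Tendsto (fun n : ℕ => samplingEntropy (graphPermuton f) n / n) atTop
      (nhds (∑ i : Fin k, (x i.succ - x i.castSucc) * Real.log |s i|)) := by
  have hI := IsPiecewiseAffine.of_breakpoints hx0 hxk hmono.monotone hs
    fun i t ht => haff i t (Set.Ioo_subset_Icc_self ht)
  simpa [Real.volume_real_Ioo_of_le (hmono Fin.castSucc_lt_succ).le] using
    samplingEntropy_div_tendsto_of_piecewiseAffine_general hI ⟨hmeas, hmp⟩
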